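/- Let M be a g×m matrix over a field with g ≥ 1, let f be a natural number, and let T be a set of column indices with |T| ≥ g + f such that the columns of M indexed by T form a full spark frame and every column of M with index outside T is zero. Then for every set S of column indices the following are equivalent: (i) for every subset F ⊆ S with |F| ≤ f, rank(M_{S∖F}) = g; (ii) |S ∩ T| ≥ g + f. -/

import Mathlib

/-! Because the columns outside `T` vanish and those inside form a full spark frame, the rank of
`M_A` equals `g` exactly when `A` contains at least `g` indices of `T`: the rank is at most
`|A ∩ T|` since the columns outside `T` do not contribute to the column space, and any `g` indices
in `A ∩ T` give `g` independent columns. Deleting at most `f` indices from `S` leaves `g` indices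
of `T` in every case iff `|S ∩ T| ≥ g + f`: the worst deletion removes as many elements of `S ∩ T`
as possible. -/

open Matrix

/-- The submatrix of `M` formed by the columns indexed by `S`. -/
def colSub {K : Type*} [Field K] {g m : ℕ} (M : Matrix (Fin g) (Fin m) K)
    (S : Finset (Fin m)) : Matrix (Fin g) {j // j ∈ S} K :=
  M.submatrix id Subtype.val

/-- The columns of the `g`-row matrix `M` indexed by `T` form a full spark
frame: every `g`-element subset of `T` indexes a linearly independent family of
columns of `M`. -/
def IsFullSpark {K : Type*} [Field K] {g m : ℕ} (M : Matrix (Fin g) (Fin m) K)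
    (T : Finset (Fin m)) : Prop :=
  ∀ S' ⊆ T, S'.card = g →
    LinearIndependent K (fun j : {j // j ∈ S'} => fun i => M i j.val)

lemma rank_colSub {K : Type*} [Field K] {g m : ℕ} (M : Matrix (Fin g) (Fin m) K)
    (A : Finset (Fin m)) :
    (colSub M A).rank = Module.finrank K (Submodule.span K (M.col '' (A : Set (Fin m)))) := by
  rw [Matrix.rank_eq_finrank_span_cols]
  have hcol : Set.range (colSub M A).col = M.col '' (A : Set (Fin m)) := by
    ext v
    constructor
    · rintro ⟨j, rfl⟩
      exact ⟨j.1, j.2, rfl⟩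
    · rintro ⟨j, hj, rfl⟩
      exact ⟨⟨j, hj⟩, rfl⟩
  rw [hcol]

lemma rank_colSub_mono {K : Type*} [Field K] {g m : ℕ} (M : Matrix (Fin g) (Fin m) K)
    {A B : Finset (Fin m)} (h : A ⊆ B) : (colSub M A).rank ≤ (colSub M B).rank := by
  rw [rank_colSub, rank_colSub]
  exact Submodule.finrank_mono (Submodule.span_mono (Set.image_mono (Finset.coe_subset.2 h)))

lemma rank_colSub_le_card_inter {K : Type*} [Field K] {g m : ℕ} (M : Matrix (Fin g) (Fin m) K)
    (T : Finset (Fin m)) (hzero : ∀ j ∉ T, ∀ i, M i j = 0) (A : Finset (Fin m)) :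
    (colSub M A).rank ≤ (A ∩ T).card := by
  have h1 : (colSub M A).rank ≤ (colSub M (A ∩ T)).rank := by
    rw [rank_colSub, rank_colSub]
    refine Submodule.finrank_mono (Submodule.span_le.2 ?_)
    rintro _ ⟨j, hj, rfl⟩
    by_cases hjT : j ∈ T
    · exact Submodule.subset_span ⟨j, Finset.mem_inter.2 ⟨hj, hjT⟩, rfl⟩
    · have : M.col j = 0 := funext (hzero j hjT)
      rw [this]
      exact Submodule.zero_mem _
  refine h1.trans ((Matrix.rank_le_card_width _).trans ?_)
  rw [Fintype.card_coe]

lemma rank_colSub_eq_iff {K : Type*} [Field K] {g m : ℕ} (M : Matrix (Fin g) (Fin m) K)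
    (T : Finset (Fin m)) (hspark : IsFullSpark M T)
    (hzero : ∀ j ∉ T, ∀ i, M i j = 0) (A : Finset (Fin m)) :
    (colSub M A).rank = g ↔ g ≤ (A ∩ T).card := by
  refine ⟨fun h => h.symm.le.trans (rank_colSub_le_card_inter M T hzero A), fun h => ?_⟩
  obtain ⟨B, hB, hBg⟩ := Finset.exists_subset_card_eq h
  have hli := hspark B (hB.trans Finset.inter_subset_right) hBg
  have hrank : (colSub M B).rank = g := by
    have hli' : LinearIndependent K ((colSub M B)ᵀ).row := hli
    rw [← Matrix.rank_transpose, hli'.rank_matrix, Fintype.card_coe, hBg]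
  have hle : (colSub M A).rank ≤ g := by
    simpa using (colSub M A).rank_le_card_height
  refine le_antisymm hle ?_
  exact hrank.symm.le.trans (rank_colSub_mono M (hB.trans Finset.inter_subset_left))

/-- If the columns of `M` indexed by `T` (with `|T| ≥ g + f`) form a full spark
frame and all other columns are zero, then `S` is a feasible robust selection
tolerating `f` faults iff `|S ∩ T| ≥ g + f`. -/
theorem robust_rank_iff_card_inter {K : Type*} [Field K] {g m : ℕ}
    (M : Matrix (Fin g) (Fin m) K) (hg : 1 ≤ g) (f : ℕ)
    (T : Finset (Fin m)) (hT : g + f ≤ T.card)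
    (hspark : IsFullSpark M T)
    (hzero : ∀ j ∉ T, ∀ i, M i j = 0)
    (S : Finset (Fin m)) :
    (∀ F ⊆ S, F.card ≤ f → (colSub M (S \ F)).rank = g) ↔
      g + f ≤ (S ∩ T).card := by
  simp only [rank_colSub_eq_iff M T hspark hzero]
  constructor
  · intro h
    by_contra! hlt
    -- The `min` covers the case where all of `S ∩ T` can be deleted; there `1 ≤ g` is needed.
    obtain ⟨F, hF, hFc⟩ := Finset.exists_subset_card_eq (min_le_right f (S ∩ T).card)
    have h1 := h F (hF.trans Finset.inter_subset_left) (by omega)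
    rw [Finset.sdiff_inter_right_comm, Finset.card_sdiff_of_subset hF] at h1
    omega
  · intro h F _ hFf
    rw [Finset.sdiff_inter_right_comm]
    have := Finset.le_card_sdiff F (S ∩ T)
    omega
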